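/- Let n ≥ 2 and let a, b be coprime positive integers. Then the subgroup of SL_n(ℤ) generated by the principal congruence subgroups SL_n(aℤ) and SL_n(bℤ) is all of SL_n(ℤ). -/

import Mathlib

/-!
Over a Euclidean domain the transvections `1 + c E_{ij}` generate `SL_n`. Fix the columns one at a
time: if `g` agrees with the identity outside the columns in `T`, and `k ∈ T`, then row operations
adding multiples of the rows in `T` leave the columns outside `T` alone. The Euclidean algorithm
makes one entry of column `k` divide all its entries in `T`; that entry is a unit because `g` is
invertible, and with a unit as pivot the column can be turned into a basis vector. Only in the last
column is there no second row to spare, and there `det g = 1` says that the pivot is `1`.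

If the ideals `I` and `J` are comaximal and `1 = x + y` with `x ∈ I` and `y ∈ J`, then
`1 + c E_{ij} = (1 + c x E_{ij}) (1 + c y E_{ij})` is a product of elements of the two congruence
subgroups.
-/

open MulAction

namespace CoprimeCongruence

variable {ι R : Type*} [Fintype ι] [DecidableEq ι]

section CommRing

variable [CommRing R]

variable (R) in
/-- The subgroup of `SL_ι(R)` generated by the elementary row operations whose source row lies in
`T`. For `T = univ` it is the usual elementary subgroup. -/
def elementarySubgroup (T : Finset ι) : Subgroup (Matrix.SpecialLinearGroup ι R) :=
  Subgroup.closure {g | ∃ i, ∃ j ∈ T, ∃ (hij : i ≠ j) (c : R),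
    g = Matrix.SpecialLinearGroup.transvection hij c}

variable (R) in
/-- The subgroup of matrices in `SL_ι(R)` whose columns outside `T` are standard basis vectors,
that is, the matrices fixing these basis vectors. -/
def columnFixingSubgroup (T : Finset ι) : Subgroup (Matrix.SpecialLinearGroup ι R) :=
  fixingSubgroup _ ((fun j => (Pi.single j 1 : ι → R)) '' (T : Set ι)ᶜ)

variable (ι) in
/-- The principal congruence subgroup `SL_ι(I)` of level `I`: the matrices congruent to the
identity modulo `I`. -/
def principalCongruenceSubgroup (I : Ideal R) : Subgroup (Matrix.SpecialLinearGroup ι R) :=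
  (Matrix.SpecialLinearGroup.map (Ideal.Quotient.mk I)).ker

lemma transvection_mem_elementarySubgroup {T : Finset ι} {i j : ι} (hij : i ≠ j) (hj : j ∈ T)
    (c : R) : Matrix.SpecialLinearGroup.transvection hij c ∈ elementarySubgroup R T :=
  Subgroup.subset_closure ⟨i, j, hj, hij, c, rfl⟩

lemma elementarySubgroup_mono {S T : Finset ι} (hST : S ⊆ T) :
    elementarySubgroup R S ≤ elementarySubgroup R T :=
  Subgroup.closure_mono fun _ ⟨i, j, hj, h⟩ => ⟨i, j, hST hj, h⟩

lemma transvection_smul {i j : ι} (hij : i ≠ j) (c : R) (v : ι → R) :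
    Matrix.SpecialLinearGroup.transvection hij c • v = Function.update v i (v i + c * v j) := by
  ext p
  rw [Matrix.SpecialLinearGroup.smul_def, Matrix.smul_eq_mulVec,
    Matrix.SpecialLinearGroup.transvection_coe, Matrix.add_mulVec, Matrix.one_mulVec,
    Matrix.single_mulVec_eq]
  rcases eq_or_ne p i with rfl | hp <;> simp [*]

lemma smul_single_one_apply (g : Matrix.SpecialLinearGroup ι R) (i j : ι) :
    (g • (Pi.single j 1 : ι → R)) i = g i j := by
  rw [Matrix.SpecialLinearGroup.smul_def, Matrix.smul_eq_mulVec, Matrix.mulVec_single_one,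
    Matrix.col_apply]

section Orbit

variable {T : Finset ι} {v w : ι → R}

lemma update_add_mul_mem_orbit {i j : ι} (hij : i ≠ j) (hj : j ∈ T) (c : R) (v : ι → R) :
    Function.update v i (v i + c * v j) ∈ orbit (elementarySubgroup R T) v :=
  ⟨⟨_, transvection_mem_elementarySubgroup hij hj c⟩, transvection_smul hij c v⟩

lemma update_mem_orbit_of_isUnit {i p : ι} (hp : p ∈ T) (hv : IsUnit (v p)) (hip : i ≠ p) (x : R) :
    Function.update v i x ∈ orbit (elementarySubgroup R T) v := by
  obtain ⟨u, hu⟩ := hv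
  have hx : x = v i + (x - v i) * ↑u⁻¹ * v p := by
    rw [← hu, Units.inv_mul_cancel_right, add_sub_cancel]
  rw [hx]
  exact update_add_mul_mem_orbit hip hp _ v

lemma mem_orbit_of_isUnit_of_eq {p : ι} (hp : p ∈ T) (hv : IsUnit (v p)) (hw : w p = v p) :
    w ∈ orbit (elementarySubgroup R T) v := by
  suffices h : ∀ S : Finset ι, S.piecewise w v ∈ orbit (elementarySubgroup R T) v by
    simpa using h Finset.univ
  intro S
  induction S using Finset.induction_on with
  | empty => simp
  | insert i S _ ih =>
    have hpivot : S.piecewise w v p = v p := by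
      by_cases hpS : p ∈ S <;> simp [hpS, hw]
    rw [Finset.piecewise_insert, ← orbit_eq_iff.2 ih]
    rcases eq_or_ne i p with rfl | hip
    · rw [hw, ← hpivot, Function.update_eq_self]
      exact mem_orbit_self _
    · exact update_mem_orbit_of_isUnit hp (hpivot ▸ hv) hip _

lemma mem_orbit_of_isUnit_of_ne {p q : ι} (hp : p ∈ T) (hq : q ∈ T) (hpq : p ≠ q)
    (hv : IsUnit (v p)) (hw : IsUnit (w q)) : w ∈ orbit (elementarySubgroup R T) v := by
  rw [← orbit_eq_iff.2 (update_mem_orbit_of_isUnit hp hv hpq.symm (w q))]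
  exact mem_orbit_of_isUnit_of_eq hq (by simpa using hw) (by simp)

lemma mem_orbit_of_isUnit_of_nontrivial (hT : T.Nontrivial) {p q : ι} (hp : p ∈ T) (hq : q ∈ T)
    (hv : IsUnit (v p)) (hw : IsUnit (w q)) : w ∈ orbit (elementarySubgroup R T) v := by
  rcases eq_or_ne p q with rfl | hpq
  · obtain ⟨r, hr, hrp⟩ := hT.exists_ne p
    have hr_unit : IsUnit (Function.update v r 1 r) := by simp
    rw [← orbit_eq_iff.2 (update_mem_orbit_of_isUnit hp hv hrp 1)]
    exact mem_orbit_of_isUnit_of_ne hr hp hrp hr_unit hw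
  · exact mem_orbit_of_isUnit_of_ne hp hq hpq hv hw

end Orbit

section ColumnFixing

variable {T : Finset ι} {g : Matrix.SpecialLinearGroup ι R}

lemma mem_columnFixingSubgroup_iff_smul :
    g ∈ columnFixingSubgroup R T ↔
      ∀ j ∉ T, g • (Pi.single j 1 : ι → R) = Pi.single j 1 := by
  simp [columnFixingSubgroup, mem_fixingSubgroup_iff]

lemma mem_columnFixingSubgroup_iff_apply :
    g ∈ columnFixingSubgroup R T ↔ ∀ j ∉ T, ∀ i, g i j = (1 : Matrix ι ι R) i j := by
  simp only [mem_columnFixingSubgroup_iff_smul, funext_iff, smul_single_one_apply,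
    Matrix.one_apply, Pi.single_apply]

lemma columnFixingSubgroup_empty : columnFixingSubgroup R (∅ : Finset ι) = ⊥ := by
  refine (Subgroup.eq_bot_iff_forall _).2 fun g hg =>
    Matrix.SpecialLinearGroup.ext _ _ fun i j => ?_
  exact mem_columnFixingSubgroup_iff_apply.1 hg j (Finset.notMem_empty j) i

lemma columnFixingSubgroup_univ : columnFixingSubgroup R (Finset.univ : Finset ι) = ⊤ :=
  (Subgroup.eq_top_iff' _).2 fun _ => mem_columnFixingSubgroup_iff_smul.2 fun j hj =>
    absurd (Finset.mem_univ j) hj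

lemma elementarySubgroup_le_columnFixingSubgroup (T : Finset ι) :
    elementarySubgroup R T ≤ columnFixingSubgroup R T := by
  refine (Subgroup.closure_le _).2 ?_
  rintro _ ⟨i, j, hj, hij, c, rfl⟩
  refine mem_columnFixingSubgroup_iff_smul.2 fun k hk => ?_
  have hjk : j ≠ k := ne_of_mem_of_not_mem hj hk
  simp [transvection_smul, hjk]

/-- Row `k` of `g⁻¹` vanishes outside `T`, so its product with column `k` of `g` writes `1` as a
combination of the entries in `T`. -/
lemma isUnit_of_forall_dvd_column (hg : g ∈ columnFixingSubgroup R T) {k : ι} (hk : k ∈ T) {d : R}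
    (hd : ∀ i ∈ T, d ∣ g i k) : IsUnit d := by
  have hinv := mem_columnFixingSubgroup_iff_apply.1 (inv_mem hg)
  have hone : ∑ i, g⁻¹ k i * g i k = 1 := by
    rw [← Matrix.mul_apply, ← Matrix.SpecialLinearGroup.coe_mul, inv_mul_cancel,
      Matrix.SpecialLinearGroup.coe_one, Matrix.one_apply_eq]
  refine isUnit_of_dvd_one (hone ▸ Finset.dvd_sum fun i _ => ?_)
  by_cases hi : i ∈ T
  · exact (hd i hi).mul_left _
  · rw [hinv i hi k, Matrix.one_apply_ne (ne_of_mem_of_not_mem hk hi), zero_mul]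
    exact dvd_zero d

lemma apply_self_eq_one_of_mem_columnFixingSubgroup_singleton {k : ι}
    (hg : g ∈ columnFixingSubgroup R {k}) : g k k = 1 := by
  have hcols : (g : Matrix ι ι R) = (1 : Matrix ι ι R).updateCol k fun i => g i k := by
    ext i j
    rcases eq_or_ne j k with rfl | hj
    · simp
    · rw [Matrix.updateCol_ne hj]
      exact mem_columnFixingSubgroup_iff_apply.1 hg j (by simpa using hj) i
  have hdet := g.det_coe
  rwa [hcols, ← Matrix.cramer_apply, Matrix.cramer_one] at hdet

end ColumnFixing

section PrincipalCongruence

lemma mem_principalCongruenceSubgroup_iff {I : Ideal R} {g : Matrix.SpecialLinearGroup ι R} :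
    g ∈ principalCongruenceSubgroup ι I ↔ ∀ i j, g i j - (1 : Matrix ι ι R) i j ∈ I := by
  rw [principalCongruenceSubgroup, MonoidHom.mem_ker,
    ← map_one (Matrix.SpecialLinearGroup.map (Ideal.Quotient.mk I)),
    Matrix.SpecialLinearGroup.ext_iff]
  exact forall₂_congr fun i j => Ideal.Quotient.eq

lemma coe_principalCongruenceSubgroup_span_singleton (m : R) :
    (principalCongruenceSubgroup ι (Ideal.span {m}) : Set (Matrix.SpecialLinearGroup ι R)) =
      {g | ∀ i j, m ∣ g.1 i j - if i = j then 1 else 0} := by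
  ext g
  simp only [SetLike.mem_coe, mem_principalCongruenceSubgroup_iff, Ideal.mem_span_singleton,
    Matrix.one_apply, Set.mem_ofPred_eq]

lemma transvection_mem_principalCongruenceSubgroup {I : Ideal R} {i j : ι} (hij : i ≠ j) {c : R}
    (hc : c ∈ I) :
    Matrix.SpecialLinearGroup.transvection hij c ∈ principalCongruenceSubgroup ι I := by
  refine mem_principalCongruenceSubgroup_iff.2 fun p q => ?_
  rw [Matrix.SpecialLinearGroup.transvection_coe, Matrix.add_apply,
    add_sub_cancel_left, Matrix.single_apply]
  split_ifs
  exacts [hc, I.zero_mem]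

lemma elementarySubgroup_le_principalCongruenceSubgroup_sup {I J : Ideal R} (hIJ : IsCoprime I J)
    (T : Finset ι) :
    elementarySubgroup R T ≤
      principalCongruenceSubgroup ι I ⊔ principalCongruenceSubgroup ι J := by
  refine (Subgroup.closure_le _).2 ?_
  rintro _ ⟨i, j, -, hij, c, rfl⟩
  obtain ⟨x, hx, y, hy, hxy⟩ := Ideal.isCoprime_iff_exists.1 hIJ
  have hc : c = c * x + c * y := by rw [← mul_add, hxy, mul_one]
  rw [hc, Matrix.SpecialLinearGroup.transvection_add]
  exact Subgroup.mul_mem_sup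
    (transvection_mem_principalCongruenceSubgroup hij (I.mul_mem_left c hx))
    (transvection_mem_principalCongruenceSubgroup hij (J.mul_mem_left c hy))

end PrincipalCongruence

end CommRing

section EuclideanDomain

variable [EuclideanDomain R] {T : Finset ι}

lemma update_mod_mem_orbit {i p : ι} (hip : i ≠ p) (hp : p ∈ T) (v : ι → R) :
    Function.update v i (v i % v p) ∈ orbit (elementarySubgroup R T) v := by
  have hmod : v i % v p = v i + -(v i / v p) * v p := by
    rw [EuclideanDomain.mod_eq_sub_mul_div]
    ring
  rw [hmod]
  exact update_add_mul_mem_orbit hip hp _ v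

/-- The entry `w p` divides the entries of the original `v`, not only those of `w`, so that
`isUnit_of_forall_dvd_column` applies to the untouched column. -/
lemma exists_mem_orbit_forall_dvd (hT : T.Nonempty) (v : ι → R) :
    ∃ w ∈ orbit (elementarySubgroup R T) v, ∃ p ∈ T, ∀ i ∈ T, w p ∣ v i := by
  by_cases hzero : ∀ i ∈ T, v i = 0
  · obtain ⟨p, hp⟩ := hT
    exact ⟨v, mem_orbit_self v, p, hp, fun i hi => by simp [hzero i hi]⟩
  push Not at hzero
  obtain ⟨p, hp, hvp⟩ := hzero
  induction hd : v p using (EuclideanDomain.r_wellFounded (R := R)).induction generalizing v p with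
  | h d ih =>
    subst hd
    by_cases hdvd : ∀ i ∈ T, v p ∣ v i
    · exact ⟨v, mem_orbit_self v, p, hp, hdvd⟩
    push Not at hdvd
    obtain ⟨i, hi, hpi⟩ := hdvd
    have hip : i ≠ p := by
      rintro rfl
      exact hpi dvd_rfl
    set v' := Function.update v i (v i % v p) with hv'
    have hv'i : v' i = v i % v p := Function.update_self ..
    have hv'i_ne : v' i ≠ 0 := by rwa [hv'i, Ne, EuclideanDomain.mod_eq_zero]
    have hdesc : EuclideanDomain.r (v' i) (v p) := hv'i ▸ EuclideanDomain.mod_lt (v i) hvp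
    obtain ⟨w, hw, q, hq, hwq⟩ := ih _ hdesc v' i hi hv'i_ne rfl
    refine ⟨w, orbit_eq_iff.2 (update_mod_mem_orbit hip hp v) ▸ hw, q, hq, fun l hl => ?_⟩
    rcases eq_or_ne l i with rfl | hl_ne
    · have hwp : w q ∣ v p := by simpa [hv', hip.symm] using hwq p hp
      exact (EuclideanDomain.dvd_mod_iff hwp).1 (hv'i ▸ hwq l hl)
    · simpa [hv', hl_ne] using hwq l hl

lemma single_one_mem_orbit_column {g : Matrix.SpecialLinearGroup ι R}
    (hg : g ∈ columnFixingSubgroup R T) {k : ι} (hk : k ∈ T) :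
    (Pi.single k 1 : ι → R) ∈ orbit (elementarySubgroup R T) (g • (Pi.single k 1 : ι → R)) := by
  rcases Finset.eq_singleton_or_nontrivial hk with rfl | hT
  · have hgk : (g • (Pi.single k 1 : ι → R)) k = 1 := by
      rw [smul_single_one_apply, apply_self_eq_one_of_mem_columnFixingSubgroup_singleton hg]
    exact mem_orbit_of_isUnit_of_eq hk (by simp [hgk]) (by simp [hgk])
  · obtain ⟨w, hw, p, hp, hdvd⟩ :=
      exists_mem_orbit_forall_dvd ⟨k, hk⟩ (g • (Pi.single k 1 : ι → R))
    simp only [smul_single_one_apply] at hdvd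
    rw [← orbit_eq_iff.2 hw]
    exact mem_orbit_of_isUnit_of_nontrivial hT hp hk (isUnit_of_forall_dvd_column hg hk hdvd)
      (by simp)

theorem columnFixingSubgroup_eq_elementarySubgroup (T : Finset ι) :
    columnFixingSubgroup R T = elementarySubgroup R T := by
  refine le_antisymm ?_ (elementarySubgroup_le_columnFixingSubgroup T)
  induction T using Finset.induction_on with
  | empty => simp [columnFixingSubgroup_empty]
  | insert k T _ ih =>
    intro g hg
    obtain ⟨⟨h, hh⟩, hhg⟩ := single_one_mem_orbit_column hg (Finset.mem_insert_self k T)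
    have hprod : h * g ∈ columnFixingSubgroup R (insert k T) :=
      mul_mem (elementarySubgroup_le_columnFixingSubgroup _ hh) hg
    have hfix : h * g ∈ columnFixingSubgroup R T := by
      refine mem_columnFixingSubgroup_iff_smul.2 fun j hj => ?_
      rcases eq_or_ne j k with rfl | hjk
      · rw [mul_smul]
        exact hhg
      · exact mem_columnFixingSubgroup_iff_smul.1 hprod j (by simp [hjk, hj])
    exact ((elementarySubgroup R _).mul_mem_cancel_left hh).1
      (elementarySubgroup_mono (Finset.subset_insert k T) (ih hfix))

theorem elementarySubgroup_univ_eq_top : elementarySubgroup R (Finset.univ : Finset ι) = ⊤ := by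
  rw [← columnFixingSubgroup_eq_elementarySubgroup, columnFixingSubgroup_univ]

end EuclideanDomain

end CoprimeCongruence

open CoprimeCongruence

theorem coprime_congruence_subgroups_generate_general {ι R : Type*} [Fintype ι] [DecidableEq ι]
    [EuclideanDomain R] {I J : Ideal R} (hIJ : IsCoprime I J) :
    principalCongruenceSubgroup ι I ⊔ principalCongruenceSubgroup ι J = ⊤ :=
  top_le_iff.1 <| elementarySubgroup_univ_eq_top.ge.trans <|
    elementarySubgroup_le_principalCongruenceSubgroup_sup hIJ Finset.univ

/-- For `n ≥ 2` and coprime positive integers `a`, `b`, the principal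
congruence subgroups `SL_n(aℤ)` and `SL_n(bℤ)` generate all of `SL_n(ℤ)`. -/
theorem coprime_congruence_subgroups_generate (n a b : ℕ)
    (hn : 2 ≤ n) (ha : 1 ≤ a) (hb : 1 ≤ b) (hab : Nat.Coprime a b) :
    Subgroup.closure
      ({g : Matrix.SpecialLinearGroup (Fin n) ℤ |
          ∀ i j : Fin n, (a : ℤ) ∣ (g.1 i j - if i = j then 1 else 0)} ∪
       {g : Matrix.SpecialLinearGroup (Fin n) ℤ |
          ∀ i j : Fin n, (b : ℤ) ∣ (g.1 i j - if i = j then 1 else 0)}) = ⊤ := by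
  simpa only [Subgroup.closure_union, ← coe_principalCongruenceSubgroup_span_singleton,
    Subgroup.closure_eq] using coprime_congruence_subgroups_generate_general
      ((Ideal.isCoprime_span_singleton_iff _ _).2 (Nat.isCoprime_iff_coprime.2 hab))
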